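/- Let A be a principal ideal domain having infinitely many prime ideals, and let V, W be representations of a group Γ on finite free A-modules such that for every maximal ideal m of A the reductions V/mV and W/mW are absolutely irreducible representations over A/m. If V/mV ≅ W/mW as Γ-representations for every maximal ideal m, then V ≅ W as A[Γ]-representations. -/

import Mathlib

open TensorProduct

/-- A family of operators (a representation of `Γ`) on an `F`-module `V` is absolutely
irreducible if for every field extension `K` of `F` the base-changed representation on
`K ⊗[F] V` has no nontrivial invariant `K`-submodule.  (We state it over a commutative ring
`F`; it is applied when `F` is a field.) -/
def IsAbsolutelyIrreducible (F : Type) [CommRing F] {Γ : Type} [Monoid Γ]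
    {V : Type} [AddCommGroup V] [Module F V] (ρ : Γ → V →ₗ[F] V) : Prop :=
  ∀ (K : Type) [Field K] [Algebra F K],
    ∀ q : Submodule K (K ⊗[F] V),
      (∀ (g : Γ), ∀ x ∈ q, LinearMap.baseChange K (ρ g) x ∈ q) → q = ⊥ ∨ q = ⊤

/-!
Intertwiners `V → W` are the solutions of a homogeneous linear system over `A`.  If the system had
no nonzero solution, its equations would span a submodule of the dual of `Hom(V, W)` containing
`c` times that dual for some `c ≠ 0`, and there would be no nonzero solution modulo a prime not
containing `c`; but infinitely many primes admit one.  So there is a nonzero intertwiner, and after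
dividing out its content it is nonzero modulo every maximal ideal.  By irreducibility of the
reductions of `W` it is then surjective modulo every maximal ideal, hence surjective, hence
bijective because `V` and `W` have the same rank.
-/

open Module

/-- A family of operators on `M` is irreducible if no submodule other than `0` and `M` is invariant
under all of them.  Following `IsAbsolutelyIrreducible`, the zero module is allowed. -/
def IsIrreducibleFamily {R ι M : Type*} [CommRing R] [AddCommGroup M] [Module R M]
    (τ : ι → End R M) : Prop :=
  ∀ q : Submodule R M, (∀ i, q ∈ (τ i).invtSubmodule) → q = ⊥ ∨ q = ⊤

/-- A vector is primitive if it is divisible only by units; over a principal ideal domain this says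
that the ideal generated by its coordinates in any basis is the unit ideal. -/
def IsPrimitiveVector (R : Type*) {M : Type*} [CommRing R] [AddCommGroup M] [Module R M]
    (x : M) : Prop :=
  ∀ (a : R) (y : M), x = a • y → IsUnit a

lemma IsAbsolutelyIrreducible.isIrreducibleFamily {F Γ V : Type} [Field F] [Monoid Γ]
    [AddCommGroup V] [Module F V] {ρ : Γ → V →ₗ[F] V} (h : IsAbsolutelyIrreducible F ρ) :
    IsIrreducibleFamily ρ := by
  intro q hq
  let e := TensorProduct.lid F V
  have he (g : Γ) (x : F ⊗[F] V) : e ((ρ g).baseChange F x) = ρ g (e x) := by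
    induction x with
    | zero => simp
    | tmul a v => simp [e]
    | add x y hx hy => simp only [map_add, hx, hy]
  have hq' : ∀ g, ∀ x ∈ q.comap e.toLinearMap, (ρ g).baseChange F x ∈ q.comap e.toLinearMap := by
    intro g x hx
    simpa only [Submodule.mem_comap, LinearEquiv.coe_coe, he] using hq g hx
  have hmap : (q.comap e.toLinearMap).map e.toLinearMap = q :=
    Submodule.map_comap_eq_of_surjective e.surjective q
  refine (h F _ hq').imp (fun hbot => ?_) fun htop => ?_
  · rw [← hmap, hbot, Submodule.map_bot]
  · rw [← hmap, htop, Submodule.map_top, LinearEquiv.range]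

lemma IsIrreducibleFamily.eq_zero_or_surjective {R ι M N : Type*} [CommRing R]
    [AddCommGroup M] [Module R M] [AddCommGroup N] [Module R N]
    {σ : ι → End R M} {τ : ι → End R N} (hτ : IsIrreducibleFamily τ) {f : M →ₗ[R] N}
    (hf : ∀ i, Function.Semiconj f (σ i) (τ i)) : f = 0 ∨ Function.Surjective f := by
  rw [← LinearMap.range_eq_bot, ← LinearMap.range_eq_top]
  refine hτ _ fun i => ?_
  rintro _ ⟨x, rfl⟩
  exact ⟨σ i x, hf i x⟩

lemma eq_top_of_forall_isMaximal_sup_smul_top {R M : Type*} [CommRing R] [AddCommGroup M]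
    [Module R M] [Module.Finite R M] {N : Submodule R M}
    (h : ∀ m : Ideal R, m.IsMaximal → N ⊔ m • ⊤ = ⊤) : N = ⊤ := by
  by_contra hN
  obtain ⟨P, hP, hNP⟩ := (eq_top_or_exists_le_coatom N).resolve_left hN
  have : IsSimpleModule R (M ⧸ P) := isSimpleModule_iff_isCoatom.mpr hP
  have hmP : annihilator R (M ⧸ P) • ⊤ ≤ P := by
    rw [Submodule.smul_le]
    intro a ha x _
    simpa [← Submodule.Quotient.mk_smul] using mem_annihilator.mp ha (Submodule.Quotient.mk x)
  exact hP.1 <| top_le_iff.mp <|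
    (h _ IsSimpleModule.annihilator_isMaximal).ge.trans (sup_le hNP hmP)

section Reduction

variable {R M N : Type*} [CommRing R] [AddCommGroup M] [Module R M] [AddCommGroup N] [Module R N]

lemma one_tmul_eq_zero_iff_mem_smul_top {I : Ideal R} {x : M} :
    (1 : R ⧸ I) ⊗ₜ[R] x = 0 ↔ x ∈ I • (⊤ : Submodule R M) := by
  rw [← (TensorProduct.quotTensorEquivQuotSMul M I).map_eq_zero_iff,
    TensorProduct.quotTensorEquivQuotSMul_mk_one_tmul, Submodule.Quotient.mk_eq_zero]

lemma mem_smul_top_iff_forall_dual [Module.Free R M] {I : Ideal R} {x : M} :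
    x ∈ I • (⊤ : Submodule R M) ↔ ∀ f : Dual R M, f x ∈ I := by
  refine ⟨fun hx f => by simpa using Submodule.smul_top_le_comap_smul_top I f hx, fun h => ?_⟩
  let b := Free.chooseBasis R M
  rw [← b.linearCombination_repr x]
  exact Submodule.sum_mem _ fun i _ =>
    Submodule.smul_mem_smul (h (b.coord i)) Submodule.mem_top

lemma mem_smul_top_iff_forall_apply_mem_smul_top [Module.Free R M] [Module.Finite R M]
    {I : Ideal R} {φ : M →ₗ[R] N} :
    φ ∈ I • (⊤ : Submodule R (M →ₗ[R] N)) ↔ ∀ x, φ x ∈ I • (⊤ : Submodule R N) := by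
  refine ⟨fun h x => Submodule.smul_top_le_comap_smul_top I (LinearMap.applyₗ x) h, fun h => ?_⟩
  let b := Free.chooseBasis R M
  have hφ : φ = ∑ j, (b.coord j).smulRight (φ (b j)) := b.ext fun k => by
    simp [Finsupp.single_apply]
  rw [hφ]
  refine Submodule.sum_mem _ fun j _ => ?_
  exact Submodule.smul_top_le_comap_smul_top I
    (LinearMap.smulRightₗ (M₂ := M) (M := N) (b.coord j)) (h (b j))

lemma baseChange_quotient_eq_zero_iff [Module.Free R M] [Module.Finite R M] {I : Ideal R}
    {φ : M →ₗ[R] N} : φ.baseChange (R ⧸ I) = 0 ↔ φ ∈ I • (⊤ : Submodule R (M →ₗ[R] N)) := by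
  rw [mem_smul_top_iff_forall_apply_mem_smul_top]
  simp only [← one_tmul_eq_zero_iff_mem_smul_top]
  refine ⟨fun h x => by rw [← LinearMap.baseChange_tmul, h, LinearMap.zero_apply], fun h =>
    LinearMap.ext fun z => ?_⟩
  obtain ⟨x, rfl⟩ := TensorProduct.mk_surjective R M (R ⧸ I) Ideal.Quotient.mk_surjective z
  exact h x

lemma IsPrimitiveVector.baseChange_quotient_ne_zero [IsPrincipalIdealRing R] [Module.Free R M]
    [Module.Finite R M] {φ : M →ₗ[R] N} (hφ : IsPrimitiveVector R φ) {m : Ideal R} (hm : m ≠ ⊤) :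
    φ.baseChange (R ⧸ m) ≠ 0 := by
  obtain ⟨p, rfl⟩ := IsPrincipalIdealRing.principal m
  rw [Ne, baseChange_quotient_eq_zero_iff, Submodule.ideal_span_singleton_smul]
  rintro ⟨χ, -, hχ⟩
  exact hm (Ideal.span_singleton_eq_top.mpr (hφ p χ hχ.symm))

lemma exists_baseChange_eq_of_surjective_algebraMap [Projective R M] {S : Type*} [CommRing S]
    [Algebra R S] (hS : Function.Surjective (algebraMap R S)) (f : S ⊗[R] M →ₗ[S] S ⊗[R] N) :
    ∃ φ : M →ₗ[R] N, φ.baseChange S = f := by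
  obtain ⟨φ, hφ⟩ := projective_lifting_property (TensorProduct.mk R S N 1)
    (f.restrictScalars R ∘ₗ TensorProduct.mk R S M 1) (TensorProduct.mk_surjective R N S hS)
  exact ⟨φ, by ext v; simpa using LinearMap.congr_fun hφ v⟩

lemma range_sup_smul_top_eq_top_of_surjective_baseChange {I : Ideal R} {φ : M →ₗ[R] N}
    (h : Function.Surjective (φ.baseChange (R ⧸ I))) : LinearMap.range φ ⊔ I • ⊤ = ⊤ := by
  refine eq_top_iff.mpr fun y _ => ?_
  obtain ⟨z, hz⟩ := h (1 ⊗ₜ y)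
  obtain ⟨x, rfl⟩ :=
    TensorProduct.mk_surjective R M (R ⧸ I) Ideal.Quotient.mk_surjective z
  have hyx : y - φ x ∈ I • (⊤ : Submodule R N) := by
    rw [← one_tmul_eq_zero_iff_mem_smul_top, TensorProduct.tmul_sub, ← hz]
    simp
  exact Submodule.mem_sup.mpr ⟨φ x, ⟨x, rfl⟩, _, hyx, add_sub_cancel _ _⟩

lemma surjective_of_forall_isMaximal_baseChange [Module.Finite R N] {φ : M →ₗ[R] N}
    (h : ∀ m : Ideal R, m.IsMaximal → Function.Surjective (φ.baseChange (R ⧸ m))) :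
    Function.Surjective φ :=
  LinearMap.range_eq_top.mp <| eq_top_of_forall_isMaximal_sup_smul_top fun m hm =>
    range_sup_smul_top_eq_top_of_surjective_baseChange (h m hm)

end Reduction

section Defect

variable {R M N : Type*} [CommRing R] [AddCommGroup M] [Module R M] [AddCommGroup N] [Module R N]

/-- The linear map `φ ↦ t ∘ φ - φ ∘ s`, whose kernel consists of the maps intertwining `s` and
`t`. -/
def intertwiningDefect (s : End R M) (t : End R N) : (M →ₗ[R] N) →ₗ[R] M →ₗ[R] N :=
  t.compRight R - s.lcomp R N

lemma intertwiningDefect_apply (s : End R M) (t : End R N) (φ : M →ₗ[R] N) :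
    intertwiningDefect s t φ = t ∘ₗ φ - φ ∘ₗ s :=
  rfl

lemma intertwiningDefect_eq_zero_iff {s : End R M} {t : End R N} {φ : M →ₗ[R] N} :
    intertwiningDefect s t φ = 0 ↔ Function.Semiconj φ s t := by
  rw [intertwiningDefect_apply, sub_eq_zero, LinearMap.ext_iff]
  exact forall_congr' fun _ => eq_comm

lemma baseChange_intertwiningDefect (S : Type*) [CommRing S] [Algebra R S] (s : End R M)
    (t : End R N) (φ : M →ₗ[R] N) :
    (intertwiningDefect s t φ).baseChange S =
      intertwiningDefect (s.baseChange S) (t.baseChange S) (φ.baseChange S) := by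
  simp only [intertwiningDefect_apply, LinearMap.baseChange_sub, LinearMap.baseChange_comp]

lemma semiconj_baseChange {s : End R M} {t : End R N} {φ : M →ₗ[R] N} (S : Type*) [CommRing S]
    [Algebra R S] (h : Function.Semiconj φ s t) :
    Function.Semiconj (φ.baseChange S) (s.baseChange S) (t.baseChange S) := by
  rw [← intertwiningDefect_eq_zero_iff] at h ⊢
  rw [← baseChange_intertwiningDefect, h, LinearMap.baseChange_zero]

end Defect

lemma finite_setOf_ideal_mem {A : Type*} [CommRing A] [IsDedekindDomain A] {c : A} (hc : c ≠ 0) :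
    {I : Ideal A | c ∈ I}.Finite := by
  have : Fintype {I : Ideal A // I ∣ Ideal.span {c}} :=
    UniqueFactorizationMonoid.fintypeSubtypeDvd _ (by simpa using hc)
  have hdvd : {I : Ideal A | I ∣ Ideal.span {c}}.Finite :=
    Set.finite_coe_iff.mp (Finite.of_fintype {I : Ideal A // I ∣ Ideal.span {c}})
  simpa only [Ideal.dvd_span_singleton] using hdvd

lemma exists_eq_smul_isPrimitiveVector {A M : Type*} [CommRing A] [IsDomain A]
    [AddCommGroup M] [Module A M] [IsTorsionFree A M] [IsNoetherian A M] {x : M} (hx : x ≠ 0) :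
    ∃ (c : A) (y : M), x = c • y ∧ IsPrimitiveVector A y := by
  obtain ⟨_, ⟨y, hxy, rfl⟩, hmax⟩ := set_has_maximal_iff_noetherian.mpr ‹IsNoetherian A M›
    {L | ∃ y : M, x ∈ A ∙ y ∧ A ∙ y = L} ⟨A ∙ x, x, Submodule.mem_span_singleton_self x, rfl⟩
  obtain ⟨c, hc⟩ := Submodule.mem_span_singleton.mp hxy
  have hy : y ≠ 0 := by
    rintro rfl
    exact hx (by rw [← hc, smul_zero])
  refine ⟨c, y, hc.symm, fun a z hz => ?_⟩
  have hle : A ∙ y ≤ A ∙ z :=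
    (Submodule.span_singleton_le_iff_mem _ _).mpr (Submodule.mem_span_singleton.mpr ⟨a, hz.symm⟩)
  have hzy : z ∈ A ∙ y := by
    by_contra hzy
    exact hmax _ ⟨z, hle hxy, rfl⟩ (hle.lt_of_not_ge fun h =>
      hzy (h (Submodule.mem_span_singleton_self z)))
  obtain ⟨b, rfl⟩ := Submodule.mem_span_singleton.mp hzy
  refine .of_mul_eq_one b (smul_left_injective A hy ?_)
  simpa only [mul_smul, one_smul] using hz.symm

section PrincipalIdealDomain

variable {A : Type*} [CommRing A] [IsDomain A] [IsPrincipalIdealRing A]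

lemma isTorsion_of_forall_dual_eq_zero {M : Type*} [AddCommGroup M] [Module A M]
    [Module.Finite A M] (h : ∀ f : Dual A M, f = 0) : IsTorsion A M := by
  intro x
  rw [← Submodule.mem_torsion_iff, ← Submodule.Quotient.mk_eq_zero,
    ← forall_dual_apply_eq_zero_iff A]
  exact fun f => LinearMap.congr_fun (h (f ∘ₗ Submodule.mkQ _)) x

lemma exists_ne_zero_forall_smul_mem_of_dualCoannihilator_eq_bot {M : Type*} [AddCommGroup M]
    [Module A M] [Module.Free A M] [Module.Finite A M] {L : Submodule A (Dual A M)}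
    (hL : L.dualCoannihilator = ⊥) : ∃ c : A, c ≠ 0 ∧ ∀ f, c • f ∈ L := by
  have hdual (l : Dual A (Dual A M ⧸ L)) : l = 0 := by
    obtain ⟨x, hx⟩ := (bijective_dual_eval A M).surjective (l ∘ₗ L.mkQ)
    have hlx (f : Dual A M) : f x = l (L.mkQ f) := LinearMap.congr_fun hx f
    have hx0 : x ∈ L.dualCoannihilator := by
      refine (Submodule.mem_dualCoannihilator x).mpr fun f hf => ?_
      rw [hlx, L.mkQ_apply, (Submodule.Quotient.mk_eq_zero L).mpr hf, map_zero]
    rw [hL, Submodule.mem_bot] at hx0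
    refine Submodule.linearMap_qext L (LinearMap.ext fun f => ?_)
    rw [LinearMap.comp_apply, ← hlx, hx0, map_zero, LinearMap.zero_comp, LinearMap.zero_apply]
  obtain ⟨c, hc, hc0⟩ :=
    Submodule.annihilator_top_inter_nonZeroDivisors (isTorsion_of_forall_dual_eq_zero hdual)
  refine ⟨c, nonZeroDivisors.ne_zero hc0, fun f => ?_⟩
  rw [← Submodule.Quotient.mk_eq_zero, Submodule.Quotient.mk_smul]
  exact Submodule.mem_annihilator.mp hc _ Submodule.mem_top

lemma exists_ne_zero_forall_apply_eq_zero {ι M N : Type*} [AddCommGroup M] [Module A M]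
    [Module.Free A M] [Module.Finite A M] [AddCommGroup N] [Module A N] [Module.Free A N]
    (T : ι → M →ₗ[A] N)
    (hT : {p : Ideal A | p.IsPrime ∧ ∃ x ∉ p • (⊤ : Submodule A M),
      ∀ i, T i x ∈ p • (⊤ : Submodule A N)}.Infinite) :
    ∃ x ≠ 0, ∀ i, T i x = 0 := by
  let L : Submodule A (Dual A M) := ⨆ i, LinearMap.range (T i).dualMap
  have hcomp_mem (i : ι) (l : Dual A N) : l ∘ₗ T i ∈ L :=
    Submodule.mem_iSup_of_mem i ⟨l, rfl⟩
  suffices hL : L.dualCoannihilator ≠ ⊥ by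
    obtain ⟨x, hx, hx0⟩ := Submodule.exists_mem_ne_zero_of_ne_bot hL
    refine ⟨x, hx0, fun i => (forall_dual_apply_eq_zero_iff A _).mp fun l => ?_⟩
    exact (Submodule.mem_dualCoannihilator x).mp hx _ (hcomp_mem i l)
  intro hL
  obtain ⟨c, hc, hcL⟩ := exists_ne_zero_forall_smul_mem_of_dualCoannihilator_eq_bot hL
  obtain ⟨p, ⟨hp, x, hx, hTx⟩, hcp⟩ := (hT.sdiff (finite_setOf_ideal_mem hc)).nonempty
  have hLx : L ≤ Submodule.comap (Dual.eval A M x) p := by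
    refine iSup_le fun i => ?_
    rintro _ ⟨l, rfl⟩
    exact mem_smul_top_iff_forall_dual.mp (hTx i) l
  exact hx <| mem_smul_top_iff_forall_dual.mpr fun f =>
    (hp.mem_or_mem (hLx (hcL f))).resolve_left hcp

variable {ι V W : Type*} [AddCommGroup V] [Module A V] [Module.Free A V] [Module.Finite A V]
  [AddCommGroup W] [Module A W] [Module.Free A W] [Module.Finite A W]
  {σ : ι → End A V} {τ : ι → End A W}

lemma exists_ne_zero_forall_semiconj
    (h : {p : Ideal A | p.IsPrime ∧ ∃ f : (A ⧸ p) ⊗[A] V →ₗ[A ⧸ p] (A ⧸ p) ⊗[A] W, f ≠ 0 ∧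
      ∀ i, Function.Semiconj f ((σ i).baseChange (A ⧸ p)) ((τ i).baseChange (A ⧸ p))}.Infinite) :
    ∃ φ : V →ₗ[A] W, φ ≠ 0 ∧ ∀ i, Function.Semiconj φ (σ i) (τ i) := by
  simp only [← intertwiningDefect_eq_zero_iff] at h ⊢
  refine exists_ne_zero_forall_apply_eq_zero (fun i => intertwiningDefect (σ i) (τ i))
    (h.mono ?_)
  rintro p ⟨hp, f, hf, hfi⟩
  obtain ⟨φ, rfl⟩ :=
    exists_baseChange_eq_of_surjective_algebraMap Ideal.Quotient.mk_surjective f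
  refine ⟨hp, φ, mt baseChange_quotient_eq_zero_iff.mpr hf, fun i => ?_⟩
  rw [← baseChange_quotient_eq_zero_iff, baseChange_intertwiningDefect, hfi]

lemma exists_surjective_forall_semiconj
    (hirr : ∀ m : Ideal A, m.IsMaximal →
      IsIrreducibleFamily fun i => (τ i).baseChange (A ⧸ m))
    {φ : V →ₗ[A] W} (hφ : φ ≠ 0) (hφi : ∀ i, Function.Semiconj φ (σ i) (τ i)) :
    ∃ ψ : V →ₗ[A] W, Function.Surjective ψ ∧ ∀ i, Function.Semiconj ψ (σ i) (τ i) := by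
  obtain ⟨c, ψ, rfl, hψ⟩ := exists_eq_smul_isPrimitiveVector (A := A) hφ
  have hψi (i : ι) : Function.Semiconj ψ (σ i) (τ i) := by
    simpa only [← intertwiningDefect_eq_zero_iff, map_smul,
      smul_eq_zero_iff_right (left_ne_zero_of_smul hφ)] using hφi i
  refine ⟨ψ, surjective_of_forall_isMaximal_baseChange fun m hm => ?_, hψi⟩
  exact ((hirr m hm).eq_zero_or_surjective fun i => semiconj_baseChange _ (hψi i)).resolve_left
    (hψ.baseChange_quotient_ne_zero hm.ne_top)

end PrincipalIdealDomain

theorem stmt_4_general {A ι V W : Type*} [CommRing A] [IsDomain A] [IsPrincipalIdealRing A]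
    [AddCommGroup V] [Module A V] [Module.Free A V] [Module.Finite A V]
    [AddCommGroup W] [Module A W] [Module.Free A W] [Module.Finite A W]
    {σ : ι → End A V} {τ : ι → End A W}
    (hirr : ∀ m : Ideal A, m.IsMaximal →
      IsIrreducibleFamily fun i => (τ i).baseChange (A ⧸ m))
    (hiso : {m : Ideal A | m.IsMaximal ∧ ∃ e : (A ⧸ m) ⊗[A] V ≃ₗ[A ⧸ m] (A ⧸ m) ⊗[A] W,
      ∀ i, Function.Semiconj e ((σ i).baseChange (A ⧸ m)) ((τ i).baseChange (A ⧸ m))}.Infinite) :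
    ∃ e : V ≃ₗ[A] W, ∀ i, Function.Semiconj e (σ i) (τ i) := by
  have hrank : finrank A V = finrank A W := by
    obtain ⟨m, hm, e, -⟩ := hiso.nonempty
    simpa only [finrank_baseChange] using e.finrank_eq
  have hsurj : ∃ φ : V →ₗ[A] W, Function.Surjective φ ∧ ∀ i, Function.Semiconj φ (σ i) (τ i) := by
    cases subsingleton_or_nontrivial V with
    | inl hV =>
      have hW : Subsingleton W := by
        rw [← finrank_eq_zero_iff_of_free (R := A), ← hrank, finrank_zero_of_subsingleton]
      exact ⟨0, Function.surjective_to_subsingleton _, fun i x => Subsingleton.elim _ _⟩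
    | inr hV =>
      obtain ⟨φ, hφ, hφi⟩ := exists_ne_zero_forall_semiconj (σ := σ) (τ := τ) <| hiso.mono <| by
        rintro m ⟨hm, e, he⟩
        refine ⟨hm.isPrime, e.toLinearMap, fun he0 => ?_, he⟩
        have hVm : Nontrivial ((A ⧸ m) ⊗[A] V) := FaithfullyFlat.rTensor_nontrivial A V (A ⧸ m)
        obtain ⟨x, hx⟩ := exists_ne (0 : (A ⧸ m) ⊗[A] V)
        exact hx (e.map_eq_zero_iff.mp (LinearMap.congr_fun he0 x))
      exact exists_surjective_forall_semiconj hirr hφ hφi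
  obtain ⟨φ, hφ, hφi⟩ := hsurj
  exact ⟨.ofBijective φ (OrzechProperty.bijective_of_surjective_of_finrank_le φ hφ hrank.le), hφi⟩

/-- Let `A` be a principal ideal domain with infinitely many prime ideals and
`V`, `W` representations of a group `Γ` on finite free `A`-modules whose reductions modulo
every maximal ideal `m` (i.e. the base changes to `A/m`) are absolutely irreducible.  If the
reductions of `V` and `W` modulo every maximal ideal are isomorphic, then `V ≅ W` as
`A[Γ]`-representations. -/
theorem stmt_4 {A : Type} [CommRing A] [IsDomain A] [IsPrincipalIdealRing A]
    (hinf : {I : Ideal A | I.IsPrime}.Infinite)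
    {Γ V W : Type} [Group Γ]
    [AddCommGroup V] [Module A V] [Module.Free A V] [Module.Finite A V]
    [AddCommGroup W] [Module A W] [Module.Free A W] [Module.Finite A W]
    (ρV : Representation A Γ V) (ρW : Representation A Γ W)
    (habsV : ∀ (m : Ideal A) [m.IsMaximal],
      IsAbsolutelyIrreducible (A ⧸ m) fun g => LinearMap.baseChange (A ⧸ m) (ρV g))
    (habsW : ∀ (m : Ideal A) [m.IsMaximal],
      IsAbsolutelyIrreducible (A ⧸ m) fun g => LinearMap.baseChange (A ⧸ m) (ρW g))
    (hiso : ∀ (m : Ideal A) [m.IsMaximal],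
      ∃ e : ((A ⧸ m) ⊗[A] V) ≃ₗ[A ⧸ m] ((A ⧸ m) ⊗[A] W),
        ∀ (g : Γ) (x : (A ⧸ m) ⊗[A] V),
          e (LinearMap.baseChange (A ⧸ m) (ρV g) x) = LinearMap.baseChange (A ⧸ m) (ρW g) (e x)) :
    ∃ e : V ≃ₗ[A] W, ∀ (g : Γ) (v : V), e (ρV g v) = ρW g (e v) :=
  stmt_4_general (fun m _ => letI := Ideal.Quotient.field m; (habsW m).isIrreducibleFamily) <|
    (hinf.sdiff (Set.finite_singleton ⊥)).mono fun m hm =>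
      have hmax : m.IsMaximal := hm.1.isMaximal hm.2
      ⟨hmax, hiso m⟩
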